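/- Let G be a finite cyclic group of order n with generator g, and let k be a field in which n is invertible (i.e. (n : k) ≠ 0). Then the k-linear map Δ on the group algebra k[G] determined by Δ(x) = x · e with e = (1/n) Σ_{j=1}^{n} g^j ⊗ g^{n−j} ∈ k[G] ⊗[k] k[G] is a normalized nearly Frobenius coproduct on k[G]. -/

import Mathlib

open TensorProduct

/-- A nearly Frobenius coproduct on a `k`-algebra `A`. -/
def IsNearlyFrobenius (k A : Type*) [Field k] [Ring A] [Algebra k A]
    (Δ : A →ₗ[k] A ⊗[k] A) : Prop :=
  ∀ a b : A, Δ (a * b) = (a ⊗ₜ[k] (1 : A)) * Δ b ∧ Δ (a * b) = Δ a * ((1 : A) ⊗ₜ[k] b)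

/-- The element `e = (1/n) ∑_{j=1}^{n} g^j ⊗ g^{n-j}` of `k[G] ⊗ k[G]`. -/
noncomputable def cyclicSepElem (k G : Type*) [Field k] [Group G] (g : G) (n : ℕ) :
    MonoidAlgebra k G ⊗[k] MonoidAlgebra k G :=
  ((n : k)⁻¹) • ∑ j ∈ Finset.Icc 1 n,
    (MonoidAlgebra.of k G (g ^ j)) ⊗ₜ[k] (MonoidAlgebra.of k G (g ^ (n - j)))

/-- The `k`-linear map `Δ` on `k[G]` determined by `Δ x = x · e`,
i.e. `Δ x = (x ⊗ 1) * e`. -/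
noncomputable def cyclicCoprod (k G : Type*) [Field k] [Group G] (g : G) (n : ℕ) :
    MonoidAlgebra k G →ₗ[k] MonoidAlgebra k G ⊗[k] MonoidAlgebra k G :=
  LinearMap.mulRight k (cyclicSepElem k G g n) ∘ₗ
    ((TensorProduct.mk k (MonoidAlgebra k G) (MonoidAlgebra k G)).flip 1)

theorem cyc_aux_gen (k G : Type*) [Field k] [Group G] (g : G) (n : ℕ) (h : g ^ n = 1) :
    ((MonoidAlgebra.of k G g) ⊗ₜ[k] (1 : MonoidAlgebra k G)) * cyclicSepElem k G g n
      = cyclicSepElem k G g n * ((1 : MonoidAlgebra k G) ⊗ₜ[k] (MonoidAlgebra.of k G g)) := by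
  unfold cyclicSepElem
  rw [mul_smul_comm, smul_mul_assoc, Finset.mul_sum, Finset.sum_mul]
  congr 1
  simp only [Algebra.TensorProduct.tmul_mul_tmul, one_mul, mul_one, ← map_mul, ← pow_succ,
    ← pow_succ']
  let f : ℕ → MonoidAlgebra k G ⊗[k] MonoidAlgebra k G := fun i =>
    (MonoidAlgebra.of k G (g ^ (i + 1))) ⊗ₜ[k] (MonoidAlgebra.of k G (g ^ (n - i)))
  have h1 : ∑ j ∈ Finset.Icc 1 n, f j = ∑ i ∈ Finset.range n, f (i + 1) := by
    rw [Finset.sum_bij (fun j _ => j - 1)]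
    · intro a ha; simp at ha ⊢; omega
    · intro a ha b hb hab; simp at ha hb hab; omega
    · intro b hb; exact ⟨b + 1, by simp at hb ⊢; omega, by simp⟩
    · intro a ha
      rw [Nat.sub_add_cancel (by simp at ha; omega)]
  have h2 : ∑ j ∈ Finset.Icc 1 n,
      (MonoidAlgebra.of k G (g ^ j)) ⊗ₜ[k] (MonoidAlgebra.of k G (g ^ (n - j + 1)))
      = ∑ i ∈ Finset.range n, f i := by
    rw [Finset.sum_bij (fun j _ => j - 1)]
    · intro a ha; simp at ha ⊢; omega
    · intro a ha b hb hab; simp at ha hb hab; omega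
    · intro b hb; exact ⟨b + 1, by simp at hb ⊢; omega, by simp⟩
    · intro a ha
      have : 1 ≤ a ∧ a ≤ n := by simpa using ha
      simp only [f]
      rw [Nat.sub_add_cancel this.1, show n - (a - 1) = n - a + 1 by omega]
  rw [h2]
  refine h1.trans ?_
  have h3 := Finset.sum_range_succ f n
  rw [Finset.sum_range_succ'] at h3
  have h4 : f 0 = f n := by simp [f, pow_succ, h]
  rw [h4] at h3
  exact add_right_cancel h3

theorem cyc_aux (k G : Type*) [Field k] [Group G] [Fintype G] (g : G)
    (hg : ∀ x : G, x ∈ Subgroup.zpowers g) (n : ℕ) (h : g ^ n = 1) (a : MonoidAlgebra k G) :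
    (a ⊗ₜ[k] (1 : MonoidAlgebra k G)) * cyclicSepElem k G g n
      = cyclicSepElem k G g n * ((1 : MonoidAlgebra k G) ⊗ₜ[k] a) := by
  induction a using MonoidAlgebra.induction_on with
  | of x =>
    obtain ⟨m, rfl⟩ := (mem_powers_iff_mem_zpowers (x := g)).2 (hg x)
    have h1 : ((MonoidAlgebra.of k G (g ^ m)) ⊗ₜ[k] (1 : MonoidAlgebra k G))
        = ((MonoidAlgebra.of k G g) ⊗ₜ[k] (1 : MonoidAlgebra k G)) ^ m := by
      rw [Algebra.TensorProduct.tmul_pow, map_pow, one_pow]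
    have h2 : ((1 : MonoidAlgebra k G) ⊗ₜ[k] (MonoidAlgebra.of k G (g ^ m)))
        = ((1 : MonoidAlgebra k G) ⊗ₜ[k] (MonoidAlgebra.of k G g)) ^ m := by
      rw [Algebra.TensorProduct.tmul_pow, map_pow, one_pow]
    have h3 : SemiconjBy (cyclicSepElem k G g n)
        ((1 : MonoidAlgebra k G) ⊗ₜ[k] (MonoidAlgebra.of k G g))
        ((MonoidAlgebra.of k G g) ⊗ₜ[k] (1 : MonoidAlgebra k G)) :=
      (cyc_aux_gen k G g n h).symm
    have h4 := (h3.pow_right m).eq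
    rw [← h1, ← h2] at h4
    exact h4.symm
  | add a b ha hb => rw [add_tmul, tmul_add, add_mul, mul_add, ha, hb]
  | smul r a ha => rw [← smul_tmul', tmul_smul, smul_mul_assoc, mul_smul_comm, ha]

/-- for a finite cyclic group `G` of order `n` with generator `g`
and a field `k` in which `n` is invertible, the map `Δ(x) = x · e` with
`e = (1/n) ∑_{j=1}^{n} gʲ ⊗ gⁿ⁻ʲ` is a normalized nearly Frobenius coproduct
on the group algebra `k[G]`. -/
theorem cyclicCoprod_isNearlyFrobenius_and_normalized (k G : Type*) [Field k]
    [Group G] [Fintype G] (g : G) (hg : ∀ x : G, x ∈ Subgroup.zpowers g)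
    (n : ℕ) (hn : Fintype.card G = n) (hnk : (n : k) ≠ 0) :
    IsNearlyFrobenius k (MonoidAlgebra k G) (cyclicCoprod k G g n) ∧
      LinearMap.mul' k (MonoidAlgebra k G) ∘ₗ cyclicCoprod k G g n = LinearMap.id := by
  have hgn : g ^ n = 1 := by rw [← hn]; exact pow_card_eq_one
  have hD : ∀ a, cyclicCoprod k G g n a
      = (a ⊗ₜ[k] (1 : MonoidAlgebra k G)) * cyclicSepElem k G g n := fun a => rfl
  refine ⟨fun a b => ⟨?_, ?_⟩, ?_⟩
  · rw [hD, hD, ← mul_assoc, Algebra.TensorProduct.tmul_mul_tmul, one_mul]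
  · rw [hD, hD, mul_assoc, ← cyc_aux k G g hg n hgn b, ← mul_assoc,
      Algebra.TensorProduct.tmul_mul_tmul, one_mul]
  · refine LinearMap.ext fun a => ?_
    rw [LinearMap.comp_apply, hD, LinearMap.id_apply, cyclicSepElem, mul_smul_comm,
      Finset.mul_sum, map_smul, map_sum]
    have : ∀ j ∈ Finset.Icc 1 n, LinearMap.mul' k (MonoidAlgebra k G)
        ((a ⊗ₜ[k] (1 : MonoidAlgebra k G)) * (MonoidAlgebra.of k G (g ^ j)) ⊗ₜ[k]
          (MonoidAlgebra.of k G (g ^ (n - j)))) = a := by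
      intro j hj
      have hj' : j ≤ n := (Finset.mem_Icc.1 hj).2
      rw [Algebra.TensorProduct.tmul_mul_tmul, LinearMap.mul'_apply, one_mul, mul_assoc,
        ← map_mul, ← pow_add, Nat.add_sub_cancel' hj', hgn, map_one, mul_one]
    rw [Finset.sum_congr rfl this, Finset.sum_const, Nat.card_Icc, Nat.add_sub_cancel,
      ← Nat.cast_smul_eq_nsmul k, smul_smul, inv_mul_cancel₀ hnk, one_smul]
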